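/- Let A ⊆ B be topological spaces such that: (i) the inclusion A → B is a cofibration; (ii) the first-coordinate projection pr₁ : {(b,b') ∈ B × B : b ≠ b'} → B is a Hurewicz fibration; and (iii) the first-coordinate projection pr₁ : {(a,a') ∈ A × A : a ≠ a'} → A is a Hurewicz fibration (conditions that hold when A ⊆ B are closed smooth manifolds). Let f : B → B be continuous with f(A) ⊆ A, and let Γ_f : B → B × B denote the graph map Γ_f(b) = (b, f(b)). Then the following are equivalent: (1) there is a homotopy H : B × [0,1] → B with H(·,0) = f, H(A × [0,1]) ⊆ A, and H(b,1) ≠ b for all b ∈ B; (2) there is a continuous map k : B → B × B ∖ Δ_B with k(A) ⊆ A × A ∖ Δ_A, together with a homotopy K : B × [0,1] → B × B from k (composed with the inclusion B × B ∖ Δ_B ⊆ B × B) to Γ_f satisfying K(A × [0,1]) ⊆ A × A. -/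

import Mathlib

open unitInterval

universe u

/-- The homotopy extension property: the inclusion `A ⊆ B` is a cofibration. -/
def IsCofibration {B : Type*} [TopologicalSpace B] (A : Set B) : Prop :=
  ∀ (Y : Type u) [TopologicalSpace Y] (g : C(B, Y)) (G : C(A × unitInterval, Y)),
    (∀ a : A, G (a, 0) = g a) →
    ∃ Gext : C(B × unitInterval, Y),
      (∀ b, Gext (b, 0) = g b) ∧ ∀ (a : A) (t : unitInterval), Gext (↑a, t) = G (a, t)

/-- The homotopy lifting property with respect to all spaces: `p` is a Hurewicz fibration. -/
def IsHurewiczFibration {E Y : Type*} [TopologicalSpace E] [TopologicalSpace Y] (p : E → Y) :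
    Prop :=
  ∀ (X : Type u) [TopologicalSpace X] (H : C(X × unitInterval, Y)) (h : C(X, E)),
    (∀ x, p (h x) = H (x, 0)) →
    ∃ Hlift : C(X × unitInterval, E), (∀ z, p (Hlift z) = H z) ∧ ∀ x, Hlift (x, 0) = h x

/-- The complement of the diagonal in `B × B`, as a topological subspace. -/
abbrev OffDiag (B : Type*) [TopologicalSpace B] : Type _ := {x : B × B // x.1 ≠ x.2}

/-!
Suppose `K` deforms a map with values off the diagonal into the graph of `f`. Lifting the first
coordinate of `K` through the projection of the deleted product moves it to a map of the form
`b ↦ (b, g b)`; only the requirement that `g` preserve `A` needs care.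

Over `A` the lift can be taken inside the deleted product of `A`. Homotopy extension in the space of
paths which start off the diagonal then replaces `K` by a deformation whose first coordinate is
stationary on `A`. For such a deformation the lifting over `B` can be switched off near `A`: there
the endpoint pairs lie in `A × A`, so a point outside `A` automatically differs from the second
coordinate. This takes the place of closedness of `A` in the usual relative lifting theorem.
-/

local notation "clamp" => Set.projIcc (0 : ℝ) 1 zero_le_one

section Avoiding

variable {X : Type u} {Y : Type*} [TopologicalSpace X] [TopologicalSpace Y]

theorem exists_homotopy_avoiding
    (hfib : IsHurewiczFibration.{u} (fun y : OffDiag Y => y.1.1))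
    (R : C(X × I, Y)) (c : C(X, Y)) (hc : ∀ x, R (x, 0) ≠ c x) :
    ∃ L : C(X × I, Y), (∀ x, L (x, 0) = c x) ∧ ∀ z, R z ≠ L z := by
  obtain ⟨Λ, hΛ, hΛ0⟩ := hfib X R ⟨fun x => ⟨(R (x, 0), c x), hc x⟩, by fun_prop⟩ fun _ => rfl
  refine ⟨⟨fun z => (Λ z).1.2, by fun_prop⟩, fun x => ?_, fun z => ?_⟩
  · simp [hΛ0]
  · exact hΛ z ▸ (Λ z).2

theorem exists_homotopicRel_avoiding_start
    (hfib : IsHurewiczFibration.{u} (fun y : OffDiag Y => y.1.1))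
    (R : C(X × I, Y)) (θ : C(X, I)) (c : C(X, Y)) {S : Set X}
    (hθ : ∀ x ∈ S, θ x = 0) (hc : ∀ x, R (x, θ x) ≠ c x) :
    ∃ g : C(X, Y), c.HomotopicRel g S ∧ ∀ x, R (x, 0) ≠ g x := by
  -- Running `R` backwards from time `θ x` at unit speed, and stopping the lift at time `θ x`, keeps
  -- it constant where `θ` vanishes even though lifts of constant paths need not be constant.
  obtain ⟨L, hL0, hL⟩ := exists_homotopy_avoiding hfib
    ⟨fun z => R (z.1, clamp (θ z.1 - z.2)), by fun_prop⟩ c (by simpa using hc)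
  refine ⟨⟨fun x => L (x, θ x), by fun_prop⟩, ⟨{
    toFun := fun z => L (z.2, min z.1 (θ z.2))
    map_zero_left := fun x => by simp [hL0]
    map_one_left := fun x => by simp [unitInterval.le_one']
    prop' := fun t x hx => by simp [hθ x hx, hL0] }⟩, fun x => ?_⟩
  simpa using hL (x, θ x)

theorem exists_homotopicRel_avoiding_cutoff (R F : C(X × I, Y)) (c : C(X, Y)) (m : C(X, ℝ))
    {S : Set X} (hmS : ∀ x ∈ S, 1 ≤ m x) (hFS : ∀ x ∈ S, ∀ t, F (x, t) = c x)
    (hRc : ∀ x, R (x, 1) ≠ c x) (hFc : ∀ x, 0 < m x → F (x, 1) = c x)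
    (hRF : ∀ x, 0 < m x → ∀ t, R (x, t) ≠ F (x, t)) :
    ∃ (θ : C(X, I)) (c' : C(X, Y)), (∀ x ∈ S, θ x = 0) ∧ c.HomotopicRel c' S ∧
      ∀ x, R (x, θ x) ≠ c' x := by
  let θ : C(X, I) := ⟨fun x => clamp (2 - 2 * m x), by fun_prop⟩
  have θ_eq_one : ∀ x, m x ≤ 2⁻¹ → θ x = 1 := fun x hx =>
    Set.projIcc_of_right_le zero_le_one (by linarith)
  let C : C(X × I, Y) :=
    ⟨fun z => if m z.1 ≤ 2⁻¹ then c z.1 else F (z.1, max (θ z.1) z.2), by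
      refine Continuous.if_le (by fun_prop) (by fun_prop) (by fun_prop) (by fun_prop) ?_
      intro z hz
      simp [θ_eq_one _ hz.le, unitInterval.le_one', hFc z.1 (by linarith)]⟩
  have C_one : ∀ x, C (x, 1) = c x := fun x => by
    by_cases hx : m x ≤ 2⁻¹
    · simp [C, if_pos hx]
    · simp [C, unitInterval.le_one', hFc x (by linarith)]
  have C_eqOn : ∀ x ∈ S, ∀ t, C (x, t) = c x := fun x hx t => by simp [C, hFS x hx]
  refine ⟨θ, ⟨fun x => C (x, 0), by fun_prop⟩, fun x hx => ?_, ⟨{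
    toFun := fun z => C (z.2, σ z.1)
    map_zero_left := fun x => by simp [C_one]
    map_one_left := fun x => by simp
    prop' := fun t x hx => C_eqOn x hx _ }⟩, fun x => ?_⟩
  · exact Set.projIcc_of_le_left zero_le_one (by linarith [hmS x hx])
  · by_cases hx : m x ≤ 2⁻¹
    · simpa [C, if_pos hx, θ_eq_one x hx] using hRc x
    · simpa [C, if_neg hx] using hRF x (by linarith) (θ x)

end Avoiding

theorem exists_continuous_isLeast_range {X T α : Type*} [TopologicalSpace X]
    [TopologicalSpace T] [CompactSpace T] [Nonempty T] [ConditionallyCompleteLinearOrder α]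
    [TopologicalSpace α] [OrderTopology α] (φ : C(X × T, α)) :
    ∃ m : C(X, α), ∀ x, IsLeast (Set.range fun s => φ (x, s)) (m x) := by
  refine ⟨⟨fun x => sInf ((fun s => φ (x, s)) '' Set.univ),
    isCompact_univ.continuous_sInf (f := fun x s => φ (x, s)) φ.continuous⟩, fun x => ?_⟩
  simpa using (isCompact_range (f := fun s => φ (x, s)) (by fun_prop)).isLeast_sInf
    (Set.range_nonempty _)

theorem exists_extension_of_corner {X Z : Type*} [TopologicalSpace X] [TopologicalSpace Z]
    (l κ : C(X × I, Z)) (h : ∀ x, l (x, 0) = κ (x, 0)) :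
    ∃ P : C((X × I) × I, Z), (∀ x t, P ((x, t), 0) = l (x, t)) ∧
      ∀ x s, P ((x, 0), s) = κ (x, s) := by
  refine ⟨⟨fun z => if z.2 ≤ z.1.2 then l (z.1.1, clamp (z.1.2 - z.2))
    else κ (z.1.1, clamp (z.2 - z.1.2)), ?_⟩, fun x t => ?_, fun x s => ?_⟩
  · refine Continuous.if_le (by fun_prop) (by fun_prop) (by fun_prop) (by fun_prop) fun z hz => ?_
    simp [hz, h]
  · simp
  · by_cases hs : s = 0
    · simp [hs, h]
    · simp [hs]

section Cofibration

variable {B : Type u} [TopologicalSpace B] {A : Set B}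

theorem IsCofibration.exists_deform_homotopy {Z : Type u} [TopologicalSpace Z]
    (hA : IsCofibration.{u} A) {U : Set Z} (K : C(B × I, Z)) (hK : ∀ b, K (b, 0) ∈ U)
    (Γ : C((A × I) × I, Z)) (hΓK : ∀ a s, Γ ((a, 0), s) = K (↑a, s))
    (hΓ : ∀ a t, Γ ((a, t), 0) ∈ U) :
    ∃ K' : C(B × I, Z), (∀ b, K' (b, 0) ∈ U) ∧ (∀ b, K' (b, 1) = K (b, 1)) ∧
      ∀ (a : A) r, ∃ t s, (t = 1 ∨ s = 1) ∧ K' (↑a, r) = Γ ((a, t), s) := by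
  -- Extend in the space of paths starting in `U`, then follow the track of the endpoints back.
  obtain ⟨G, hG0, hGA⟩ := hA {γ : C(I, Z) // γ 0 ∈ U}
    ⟨fun b => ⟨K.curry b, hK b⟩, by fun_prop⟩
    ⟨fun z => ⟨Γ.curry z, hΓ z.1 z.2⟩, by fun_prop⟩
    fun a => Subtype.ext (ContinuousMap.ext (hΓK a))
  refine ⟨⟨fun z => (G (z.1, clamp (2 - 2 * z.2))).1 (clamp (2 * z.2)), by fun_prop⟩,
    fun b => ?_, fun b => ?_, fun a r => ⟨clamp (2 - 2 * r), clamp (2 * r), ?_, ?_⟩⟩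
  · simpa using (G (b, clamp 2)).2
  · have clamp_two : clamp 2 = 1 := Set.projIcc_of_right_le _ one_le_two
    simp [hG0, clamp_two]
  · rcases le_total (r : ℝ) (1 / 2) with hr | hr
    · exact .inl (Set.projIcc_of_right_le _ (by linarith))
    · exact .inr (Set.projIcc_of_right_le _ (by linarith))
  · simp [hGA]

theorem IsCofibration.exists_deformation_near (hA : IsCofibration.{u} A) :
    ∃ (ψ : C(B × I, B)) (χ : C(B, ℝ)), (∀ b, ψ (b, 0) = b) ∧ (∀ a ∈ A, ∀ t, ψ (a, t) = a) ∧
      (∀ a ∈ A, χ a = 1) ∧ ∀ b, 0 < χ b → ψ (b, 1) ∈ A := by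
  obtain ⟨r, hr0, hrA⟩ := hA {z : B × I // z.2 = 0 ∨ z.1 ∈ A}
    ⟨fun b => ⟨(b, 0), .inl rfl⟩, by fun_prop⟩
    ⟨fun z => ⟨(↑z.1, z.2), .inr z.1.2⟩, by fun_prop⟩ fun _ => rfl
  refine ⟨⟨fun z => (r z).1.1, by fun_prop⟩, ⟨fun b => (r (b, 1)).1.2, by fun_prop⟩,
    fun b => ?_, fun a ha t => ?_, fun a ha => ?_, fun b hb => ?_⟩
  · simp [hr0]
  · exact congrArg (·.1.1) (hrA ⟨a, ha⟩ t)
  · simpa using congrArg (fun z => (z.1.2 : ℝ)) (hrA ⟨a, ha⟩ 1)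
  · refine (r (b, 1)).2.resolve_left fun h => ?_
    simp [h] at hb

end Cofibration

/-- Two self-maps of `B` are relatively homotopic if they are joined by a homotopy through maps
`(B, A) → (B, A)`. -/
def RelHomotopic {B : Type*} [TopologicalSpace B] (A : Set B) (f g : C(B, B)) : Prop :=
  f.HomotopicWith g fun h => Set.MapsTo h A A

/-- `K` is a relative deformation, into the graph of `f`, of a map with values off the diagonal. The
off-diagonal map is at time `0` and the graph at time `1`. -/
structure IsGraphDeformation {B : Type*} [TopologicalSpace B] (A : Set B) (f : C(B, B))
    (K : C(B × I, B × B)) : Prop where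
  off_diag : ∀ b, (K (b, 0)).1 ≠ (K (b, 0)).2
  eq_graph : ∀ b, K (b, 1) = (b, f b)
  mem : ∀ a ∈ A, ∀ t, K (a, t) ∈ A ×ˢ A

section Relative

variable {B : Type u} [TopologicalSpace B] {A : Set B} {f : C(B, B)} {K : C(B × I, B × B)}

theorem RelHomotopic.of_homotopicRel {g : C(B, B)} (h : f.HomotopicRel g A)
    (hf : Set.MapsTo f A A) : RelHomotopic A f g := by
  obtain ⟨H⟩ := h
  exact ⟨{ H.toHomotopy with prop' := fun t a ha => by simpa using H.eq_fst t ha ▸ hf ha }⟩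

theorem RelHomotopic.exists_homotopy {g : C(B, B)} (h : RelHomotopic A f g) :
    ∃ H : C(B × I, B), (∀ b, H (b, 0) = f b) ∧ (∀ b, H (b, 1) = g b) ∧
      ∀ a ∈ A, ∀ t, H (a, t) ∈ A := by
  obtain ⟨H⟩ := h
  exact ⟨⟨fun z => H (z.2, z.1), by fun_prop⟩, fun b => by simp, fun b => by simp,
    fun a ha t => H.prop t ha⟩

namespace IsGraphDeformation

theorem exists_stationary (hK : IsGraphDeformation A f K) (hcofib : IsCofibration.{u} A)
    (hfibA : IsHurewiczFibration.{u} (fun x : OffDiag A => x.1.1)) :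
    ∃ K', IsGraphDeformation A f K' ∧ ∀ a ∈ A, ∀ t, (K' (a, t)).1 = a := by
  let K₁ : C(A × I, A) := ⟨fun z => ⟨(K (↑z.1, z.2)).1, (hK.mem _ z.1.2 _).1⟩, by fun_prop⟩
  let K₂ : C(A × I, A) := ⟨fun z => ⟨(K (↑z.1, z.2)).2, (hK.mem _ z.1.2 _).2⟩, by fun_prop⟩
  obtain ⟨L, hL0, hL⟩ := exists_homotopy_avoiding hfibA K₁ ⟨fun a => K₂ (a, 0), by fun_prop⟩
    fun a h => hK.off_diag a (congrArg Subtype.val h)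
  obtain ⟨P, hP0, hPK⟩ := exists_extension_of_corner L K₂ hL0
  let Γ : C((A × I) × I, B × B) :=
    ⟨fun z => (K₁ (z.1.1, max z.2 z.1.2), P z), by fun_prop⟩
  obtain ⟨K', hK'0, hK'1, hK'A⟩ := hcofib.exists_deform_homotopy (U := {z : B × B | z.1 ≠ z.2})
    K hK.off_diag Γ (fun a s => by simp [Γ, hPK, K₁, K₂])
    (fun a t => by simpa [Γ, hP0] using Subtype.coe_injective.ne (hL (a, t)))
  have stationary : ∀ a ∈ A, ∀ t, (K' (a, t)).1 = a := fun a ha r => by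
    obtain ⟨t, s, hts, h⟩ := hK'A ⟨a, ha⟩ r
    have : max s t = 1 := by
      rcases hts with rfl | rfl <;> simp [unitInterval.le_one']
    simp [h, Γ, this, K₁, hK.eq_graph]
  refine ⟨K', ⟨hK'0, fun b => by rw [hK'1, hK.eq_graph], fun a ha r => ?_⟩, stationary⟩
  obtain ⟨t, s, -, h⟩ := hK'A ⟨a, ha⟩ r
  rw [h]
  exact ⟨Subtype.property (K₁ _), Subtype.property (P _)⟩

theorem exists_retracted_near (hK : IsGraphDeformation A f K)
    (hstat : ∀ a ∈ A, ∀ t, (K (a, t)).1 = a) (hcofib : IsCofibration.{u} A) :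
    ∃ (K' : C(B × I, B × B)) (χ : C(B, ℝ)), IsGraphDeformation A f K' ∧
      (∀ a ∈ A, ∀ t, (K' (a, t)).1 = a) ∧ (∀ a ∈ A, χ a = 1) ∧
      ∀ b, 0 < χ b → (K' (b, 0)).1 ∈ A ∧ K' ((K' (b, 0)).1, 0) = K' (b, 0) := by
  obtain ⟨ψ, χ, hψ0, hψA, hχA, hχ⟩ := hcofib.exists_deformation_near
  let K' : C(B × I, B × B) := ⟨fun z => K (ψ (z.1, σ z.2), z.2), by fun_prop⟩
  have K'_zero : ∀ b, K' (b, 0) = K (ψ (b, 1), 0) := fun b => by simp [K']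
  have K'_eqOn : ∀ a ∈ A, ∀ t, K' (a, t) = K (a, t) := fun a ha t => by simp [K', hψA a ha]
  refine ⟨K', χ, ⟨fun b => ?_, fun b => ?_, fun a ha t => ?_⟩, fun a ha t => ?_, hχA,
    fun b hb => ?_⟩
  · exact K'_zero b ▸ hK.off_diag _
  · simp [K', hψ0, hK.eq_graph]
  · exact K'_eqOn a ha t ▸ hK.mem a ha t
  · exact K'_eqOn a ha t ▸ hstat a ha t
  · rw [K'_zero, hstat _ (hχ b hb), K'_eqOn _ (hχ b hb)]
    exact ⟨hχ b hb, rfl⟩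

theorem relHomotopic_snd_zero (hK : IsGraphDeformation A f K) :
    RelHomotopic A f ⟨fun b => (K (b, 0)).2, by fun_prop⟩ :=
  ⟨{ toFun := fun z => (K (z.2, σ z.1)).2
     map_zero_left := fun b => by simp [hK.eq_graph]
     map_one_left := fun b => by simp
     prop' := fun t a ha => (hK.mem a ha _).2 }⟩

theorem ne_snd_of_retracted (hK : IsGraphDeformation A f K)
    (hstat : ∀ a ∈ A, ∀ t, (K (a, t)).1 = a) {b : B} (hbA : (K (b, 0)).1 ∈ A)
    (hb : K ((K (b, 0)).1, 0) = K (b, 0)) : b ≠ (K (b, 0)).2 := by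
  intro h
  have hmem : b ∈ A := by
    rw [h, ← hb]
    exact (hK.mem _ hbA 0).2
  exact hK.off_diag b ((hstat b hmem 0).trans h)

theorem exists_relHomotopic_fixedPointFree (hK : IsGraphDeformation A f K)
    (hcofib : IsCofibration.{u} A)
    (hfibB : IsHurewiczFibration.{u} (fun x : OffDiag B => x.1.1))
    (hfibA : IsHurewiczFibration.{u} (fun x : OffDiag A => x.1.1)) :
    ∃ g, RelHomotopic A f g ∧ ∀ b, g b ≠ b := by
  obtain ⟨K₀, hK₀, hstat₀⟩ := hK.exists_stationary hcofib hfibA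
  obtain ⟨K, χ, hK, hstat, hχA, hχ⟩ := hK₀.exists_retracted_near hstat₀ hcofib
  let q : C(B, B) := ⟨fun b => (K (b, 0)).2, by fun_prop⟩
  let R : C(B × I, B) := ⟨fun z => (K (z.1, σ z.2)).1, by fun_prop⟩
  have R_zero : ∀ b, R (b, 0) = b := fun b => by simp [R, hK.eq_graph]
  have R_one : ∀ b, R (b, 1) = (K (b, 0)).1 := fun b => by simp [R]
  obtain ⟨m, hm⟩ := exists_continuous_isLeast_range (χ.comp R)
  have m_le : ∀ b s, m b ≤ χ (R (b, s)) := fun b s => (hm b).2 ⟨s, rfl⟩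
  have m_eqOn : ∀ a ∈ A, m a = 1 := fun a ha => by
    obtain ⟨s, hs⟩ := (hm a).1
    simpa [R, hstat a ha, hχA a ha] using hs.symm
  obtain ⟨θ, c, hθA, hqc, hc⟩ := exists_homotopicRel_avoiding_cutoff R (q.comp R) q m (S := A)
    (fun a ha => (m_eqOn a ha).ge) (fun a ha t => by simp [R, hstat a ha])
    (fun b => by simpa [R_one, q] using hK.off_diag b)
    (fun b hb => by
      have hb' : 0 < χ b := R_zero b ▸ hb.trans_le (m_le b 0)
      simp [R_one, q, (hχ b hb').2])
    (fun b hb t =>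
      have ⟨hmem, hfix⟩ := hχ _ (hb.trans_le (m_le b t))
      hK.ne_snd_of_retracted hstat hmem hfix)
  obtain ⟨g, hcg, hg⟩ := exists_homotopicRel_avoiding_start hfibB R θ c hθA hc
  have hqg : q.HomotopicRel g A := hqc.trans hcg
  exact ⟨g, hK.relHomotopic_snd_zero.trans (RelHomotopic.of_homotopicRel hqg fun a ha =>
    (hK.mem a ha 0).2), fun b => by simpa [R_zero] using (hg b).symm⟩

end IsGraphDeformation

end Relative

/-- For a relative map `f : (B,A) → (B,A)`, with the inclusion `A ⊆ B` a
cofibration and the first-coordinate projections of the deleted products of `B` and of `A`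
Hurewicz fibrations, `f` is relatively homotopic to a fixed point free map if and only if its
graph `Γ_f` admits, up to relative homotopy, a relative lift to the complement of the
diagonal. -/
theorem stmt3 {B : Type u} [TopologicalSpace B] (A : Set B)
    (hcofib : IsCofibration.{u} A)
    (hfibB : IsHurewiczFibration.{u} (fun x : OffDiag B => x.1.1))
    (hfibA : IsHurewiczFibration.{u}
      (fun x : {y : A × A // y.1 ≠ y.2} => x.1.1))
    (f : C(B, B)) (hf : ∀ a ∈ A, f a ∈ A) :
    ((∃ H : C(B × unitInterval, B),
        (∀ b, H (b, 0) = f b) ∧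
        (∀ a ∈ A, ∀ t : unitInterval, H (a, t) ∈ A) ∧
        (∀ b, H (b, 1) ≠ b)) ↔
      (∃ k : C(B, OffDiag B),
        (∀ a ∈ A, ((k a : B × B).1 ∈ A ∧ (k a : B × B).2 ∈ A)) ∧
        ∃ K : C(B × unitInterval, B × B),
          (∀ b, K (b, 0) = (k b : B × B)) ∧
          (∀ b, K (b, 1) = (b, f b)) ∧
          (∀ a ∈ A, ∀ t : unitInterval, ((K (a, t)).1 ∈ A ∧ (K (a, t)).2 ∈ A)))) := by
  constructor
  · rintro ⟨H, hH0, hHA, hH1⟩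
    exact ⟨⟨fun b => ⟨(b, H (b, 1)), (hH1 b).symm⟩, by fun_prop⟩, fun a ha => ⟨ha, hHA a ha 1⟩,
      ⟨fun z => (z.1, H (z.1, σ z.2)), by fun_prop⟩, fun b => by simp, fun b => by simp [hH0],
      fun a ha t => ⟨ha, hHA a ha _⟩⟩
  · rintro ⟨k, -, K, hK0, hK1, hKA⟩
    have hK : IsGraphDeformation A f K := ⟨fun b => hK0 b ▸ (k b).2, hK1, hKA⟩
    obtain ⟨g, hfg, hg⟩ := hK.exists_relHomotopic_fixedPointFree hcofib hfibB hfibA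
    obtain ⟨H, hH0, hH1, hHA⟩ := hfg.exists_homotopy
    exact ⟨H, hH0, hHA, fun b => hH1 b ▸ hg b⟩
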